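/- arXiv:1711.09253 — 3 statements merged into one kernel-verified Lean document; each statement's English description precedes it below -/
import Mathlib

section
/- Let m, n, p, a, b ∈ ℂ and let z₁, z₂, z₃ be the roots with multiplicity of X³ + mX² + nX + p over ℂ. Then ∏ᵢ₌₁³ (Y + zᵢ² + b·zᵢ + a) = Y³ + (3a − mb + m² − 2n)·Y² + (nb² + (3p − mn)b + n² − 2mp − 2mab + (2m² − 4n)a + 3a²)·Y + (−pb³ + mpb² − npb + p² + nab² + (3p − mn)ab + (n² − 2mp)a + (m² − 2n)a² − ma²b + a³). -/
open Polynomial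

/-!
Since `z² + bz + a` is `z(z + b)` shifted by `a`, the transform for `a` is the transform for `0`
with `Y` replaced by `Y + a`. For `a = 0` the constant term factors as
`z₁z₂z₃ · (z₁ + b)(z₂ + b)(z₃ + b) = p · f(-b)`, where `f = X³ + mX² + nX + p`, and Vieta's formulas
turn the other two elementary symmetric functions of the `zᵢ(zᵢ + b)` into polynomials in `b` and
the coefficients of `f`.
-/

section CommSemiring

variable {R : Type*} [CommSemiring R]

/-- The Tschirnhaus transform, by the quadratic subsidiary equation `z² + bz + a + y = 0`, of the
monic polynomial whose multiset of roots is `s`. It is encoded through the roots, so that it makes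
sense over any commutative semiring. -/
noncomputable def tschirnhausTransform (s : Multiset R) (b a : R) : R[X] :=
  (s.map fun z ↦ X + C (z ^ 2 + b * z + a)).prod

theorem tschirnhausTransform_triple (x y z b a : R) :
    tschirnhausTransform {x, y, z} b a =
      (X + C (x ^ 2 + b * x + a)) * (X + C (y ^ 2 + b * y + a)) *
        (X + C (z ^ 2 + b * z + a)) := by
  simp [tschirnhausTransform, mul_assoc]

theorem tschirnhausTransform_eq_comp (s : Multiset R) (b a : R) :
    tschirnhausTransform s b a = (tschirnhausTransform s b 0).comp (X + C a) := by
  simp only [tschirnhausTransform, multiset_prod_comp, Multiset.map_map]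
  congr 1
  refine Multiset.map_congr rfl fun z _ ↦ ?_
  simp only [Function.comp_apply, add_comp, X_comp, C_comp, add_zero, C_add]
  ring

theorem X_add_C_mul_X_add_C_mul_X_add_C (u v w : R) :
    (X + C u) * (X + C v) * (X + C w) =
      X ^ 3 + C (u + v + w) * X ^ 2 + C (u * v + u * w + v * w) * X + C (u * v * w) := by
  simp only [C_add, C_mul]
  ring

theorem monic_cubic_comp_X_add_C (u v w a : R) :
    (X ^ 3 + C u * X ^ 2 + C v * X + C w).comp (X + C a) =
      X ^ 3 + C (u + 3 * a) * X ^ 2 + C (v + 2 * u * a + 3 * a ^ 2) * X +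
        C (w + v * a + u * a ^ 2 + a ^ 3) := by
  simp only [add_comp, mul_comp, pow_comp, X_comp, C_comp, map_add, map_mul, map_pow, map_ofNat]
  ring

end CommSemiring

section CommRing

variable {R : Type*} [CommRing R] {m n p x y z : R}

theorem monic_cubic_eq_prod_of_roots_eq [IsDomain R]
    (hroots : (X ^ 3 + C m * X ^ 2 + C n * X + C p).roots = {x, y, z}) :
    X ^ 3 + C m * X ^ 2 + C n * X + C p = (X - C x) * (X - C y) * (X - C z) := by
  have hmonic : (X ^ 3 + C m * X ^ 2 + C n * X + C p).Monic := by monicity!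
  have hdegree : (X ^ 3 + C m * X ^ 2 + C n * X + C p).natDegree = 3 := by compute_degree!
  have hcard : (X ^ 3 + C m * X ^ 2 + C n * X + C p).roots.card =
      (X ^ 3 + C m * X ^ 2 + C n * X + C p).natDegree := by
    simp [hroots, hdegree]
  rw [← prod_multiset_X_sub_C_of_monic_of_roots_card_eq hmonic hcard, hroots]
  simp [mul_assoc]

theorem monic_cubic_vieta
    (hprod : X ^ 3 + C m * X ^ 2 + C n * X + C p = (X - C x) * (X - C y) * (X - C z)) :
    m = -(x + y + z) ∧ n = x * y + x * z + y * z ∧ p = -(x * y * z) := by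
  have hcubic : (⟨1, m, n, p⟩ : Cubic R) =
      ⟨1, -(x + y + z), x * y + x * z + y * z, -(x * y * z)⟩ := by
    rw [← Cubic.toPoly_injective, ← Cubic.prod_X_sub_C_eq, ← hprod]
    simp [Cubic.toPoly]
  simpa using hcubic

theorem tschirnhausTransform_triple_zero (b : R)
    (hprod : X ^ 3 + C m * X ^ 2 + C n * X + C p = (X - C x) * (X - C y) * (X - C z)) :
    tschirnhausTransform {x, y, z} b 0 =
      X ^ 3 + C (m ^ 2 - 2 * n - m * b) * X ^ 2 +
        C (n * b ^ 2 + (3 * p - m * n) * b + (n ^ 2 - 2 * m * p)) * X +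
        C (p * (-b ^ 3 + m * b ^ 2 - n * b + p)) := by
  obtain ⟨hm, hn, hp⟩ := monic_cubic_vieta hprod
  have hfactor (t : R) : t ^ 2 + b * t + 0 = t * (t + b) := by ring
  have hsum : x * (x + b) + y * (y + b) + z * (z + b) = m ^ 2 - 2 * n - m * b := by
    rw [hm, hn]
    ring
  have hpairs : x * (x + b) * (y * (y + b)) + x * (x + b) * (z * (z + b)) +
      y * (y + b) * (z * (z + b)) =
        n * b ^ 2 + (3 * p - m * n) * b + (n ^ 2 - 2 * m * p) := by
    rw [hm, hn, hp]
    ring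
  have heval : -b ^ 3 + m * b ^ 2 - n * b + p = -((x + b) * (y + b) * (z + b)) := by
    rw [hm, hn, hp]
    ring
  have hconst : x * (x + b) * (y * (y + b)) * (z * (z + b)) =
      p * (-b ^ 3 + m * b ^ 2 - n * b + p) := by
    rw [heval, hp]
    ring
  simp only [tschirnhausTransform_triple, hfactor, X_add_C_mul_X_add_C_mul_X_add_C,
    hsum, hpairs, hconst]

theorem bring_cubic_tschirnhaus_transform_general (b a : R)
    (hprod : X ^ 3 + C m * X ^ 2 + C n * X + C p = (X - C x) * (X - C y) * (X - C z)) :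
    (X + C (x ^ 2 + b * x + a)) * (X + C (y ^ 2 + b * y + a)) *
        (X + C (z ^ 2 + b * z + a)) =
      X ^ 3 + C (3 * a - m * b + m ^ 2 - 2 * n) * X ^ 2 +
        C (n * b ^ 2 + (3 * p - m * n) * b + n ^ 2 - 2 * m * p - 2 * m * a * b +
            (2 * m ^ 2 - 4 * n) * a + 3 * a ^ 2) * X +
        C (-p * b ^ 3 + m * p * b ^ 2 - n * p * b + p ^ 2 + n * a * b ^ 2 +
            (3 * p - m * n) * a * b + (n ^ 2 - 2 * m * p) * a +
            (m ^ 2 - 2 * n) * a ^ 2 - m * a ^ 2 * b + a ^ 3) := by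
  rw [← tschirnhausTransform_triple, tschirnhausTransform_eq_comp,
    tschirnhausTransform_triple_zero b hprod, monic_cubic_comp_X_add_C]
  simp only [map_add, map_sub, map_mul, map_pow, map_neg, map_ofNat]
  ring

end CommRing

/-- The Tschirnhaus transform of the cubic `X³ + mX² + nX + p` by the quadratic
subsidiary `z² + bz + a + y = 0`: with roots `z₁, z₂, z₃` (with multiplicity),
`∏ᵢ (Y + zᵢ² + b·zᵢ + a)` is the explicit cubic computed by Bring in §VI. -/
theorem bring_cubic_tschirnhaus_transform (m n p a b z₁ z₂ z₃ : ℂ)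
    (hroots : (X ^ 3 + C m * X ^ 2 + C n * X + C p).roots = {z₁, z₂, z₃}) :
    (X + C (z₁ ^ 2 + b * z₁ + a)) * (X + C (z₂ ^ 2 + b * z₂ + a)) *
        (X + C (z₃ ^ 2 + b * z₃ + a)) =
      X ^ 3 + C (3 * a - m * b + m ^ 2 - 2 * n) * X ^ 2 +
        C (n * b ^ 2 + (3 * p - m * n) * b + n ^ 2 - 2 * m * p - 2 * m * a * b +
            (2 * m ^ 2 - 4 * n) * a + 3 * a ^ 2) * X +
        C (-p * b ^ 3 + m * p * b ^ 2 - n * p * b + p ^ 2 + n * a * b ^ 2 +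
            (3 * p - m * n) * a * b + (n ^ 2 - 2 * m * p) * a +
            (m ^ 2 - 2 * n) * a ^ 2 - m * a ^ 2 * b + a ^ 3) :=
  bring_cubic_tschirnhaus_transform_general b a (monic_cubic_eq_prod_of_roots_eq hroots)
end

section
/- Let m, n, p ∈ ℂ with m² ≠ 3n. Let b ∈ ℂ be any root of (3n − m²)·b² + (2m³ − 7mn + 9p)·b + (4m²n − m⁴ − n² − 6mp) = 0, and set a = (mb − m² + 2n)/3. Let z₁, z₂, z₃ be the roots with multiplicity of X³ + mX² + nX + p over ℂ. Then the polynomial T(Y) = ∏ᵢ₌₁³ (Y + zᵢ² + b·zᵢ + a) has zero coefficient of Y² and zero coefficient of Y¹; that is, T(Y) = Y³ + c for some c ∈ ℂ. In particular, both intermediate terms of a general cubic can be removed by a quadratic Tschirnhaus transformation whose parameters are found by solving only a quadratic equation. -/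
open Polynomial

/-!
Let `yᵢ = zᵢ² + b zᵢ + a`, with elementary symmetric functions `e₁, e₂, e₃`, so that
`T(Y) = Y³ + e₁ Y² + e₂ Y + e₃`. The combination `3 e₂ - e₁²` is invariant under translating all
`yᵢ` simultaneously, so it does not depend on `a`: as a polynomial in `b` it has degree at most
two, and it is the quadratic that `b` solves. The choice of `a` makes `e₁` vanish, hence
`3 e₂ = 0`.
-/

theorem cubic_eq_of_roots_eq {R : Type*} [CommRing R] [IsDomain R] {P : Cubic R} {x y z : R}
    (ha : P.a ≠ 0) (hroots : P.roots = {x, y, z}) :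
    P = ⟨P.a, P.a * -(x + y + z), P.a * (x * y + x * z + y * z), P.a * -(x * y * z)⟩ := by
  rw [Cubic.roots] at hroots
  have hcard : P.toPoly.roots.card = P.toPoly.natDegree := by
    rw [hroots, Cubic.natDegree_of_a_ne_zero ha, Multiset.card_eq_three]
    exact ⟨x, y, z, rfl⟩
  have hprod : C P.a * (X - C x) * (X - C y) * (X - C z) = P.toPoly := by
    simpa [hroots, Cubic.leadingCoeff_of_a_ne_zero ha, mul_assoc] using
      C_leadingCoeff_mul_prod_multiset_X_sub_C hcard
  rwa [← Cubic.toPoly_injective, ← Cubic.C_mul_prod_X_sub_C_eq, eq_comm]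

section CommRing

variable {R : Type*} [CommRing R]

theorem prod_X_add_C_eq_toPoly (u v w : R) :
    (X + C u) * (X + C v) * (X + C w) =
      Cubic.toPoly ⟨1, u + v + w, u * v + u * w + v * w, u * v * w⟩ := by
  simp only [Cubic.toPoly, C_add, C_mul, C_1]
  ring

/-- Bring's quadratic in `b`, whose roots are the admissible linear coefficients of the subsidiary
equation `z² + bz + a + y = 0` for the cubic `X³ + mX² + nX + p`. -/
def bringQuadratic (m n p b : R) : R :=
  (3 * n - m ^ 2) * b ^ 2 + (2 * m ^ 3 - 7 * m * n + 9 * p) * b +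
    (4 * m ^ 2 * n - m ^ 4 - n ^ 2 - 6 * m * p)

variable {m n p z₁ z₂ z₃ : R}

theorem sum_sq_add_mul_add (hm : m = -(z₁ + z₂ + z₃)) (hn : n = z₁ * z₂ + z₁ * z₃ + z₂ * z₃)
    (b a : R) :
    (z₁ ^ 2 + b * z₁ + a) + (z₂ ^ 2 + b * z₂ + a) + (z₃ ^ 2 + b * z₃ + a) =
      3 * a - (m * b - m ^ 2 + 2 * n) := by
  subst hm hn
  ring

theorem three_mul_sum_mul_sq_add_mul_add (hm : m = -(z₁ + z₂ + z₃))
    (hn : n = z₁ * z₂ + z₁ * z₃ + z₂ * z₃) (hp : p = -(z₁ * z₂ * z₃)) (b a : R) :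
    3 * ((z₁ ^ 2 + b * z₁ + a) * (z₂ ^ 2 + b * z₂ + a) +
        (z₁ ^ 2 + b * z₁ + a) * (z₃ ^ 2 + b * z₃ + a) +
        (z₂ ^ 2 + b * z₂ + a) * (z₃ ^ 2 + b * z₃ + a)) =
      ((z₁ ^ 2 + b * z₁ + a) + (z₂ ^ 2 + b * z₂ + a) + (z₃ ^ 2 + b * z₃ + a)) ^ 2 +
        bringQuadratic m n p b := by
  subst hm hn hp
  rw [bringQuadratic]
  ring

end CommRing

theorem bring_cubic_remove_both_terms_general {R : Type*} [CommRing R] [IsDomain R]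
    (h3 : (3 : R) ≠ 0) {m n p b a z₁ z₂ z₃ : R} (hb : bringQuadratic m n p b = 0)
    (ha : 3 * a = m * b - m ^ 2 + 2 * n)
    (hroots : (X ^ 3 + C m * X ^ 2 + C n * X + C p).roots = {z₁, z₂, z₃}) :
    ((X + C (z₁ ^ 2 + b * z₁ + a)) * (X + C (z₂ ^ 2 + b * z₂ + a)) *
        (X + C (z₃ ^ 2 + b * z₃ + a))).coeff 2 = 0 ∧
    ((X + C (z₁ ^ 2 + b * z₁ + a)) * (X + C (z₂ ^ 2 + b * z₂ + a)) *
        (X + C (z₃ ^ 2 + b * z₃ + a))).coeff 1 = 0 ∧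
    ∃ c : R,
      (X + C (z₁ ^ 2 + b * z₁ + a)) * (X + C (z₂ ^ 2 + b * z₂ + a)) *
        (X + C (z₃ ^ 2 + b * z₃ + a)) = X ^ 3 + C c := by
  have hcubic : (⟨1, m, n, p⟩ : Cubic R).roots = {z₁, z₂, z₃} := by
    rw [Cubic.roots, Cubic.toPoly, C_1, one_mul, hroots]
  obtain ⟨hm, hn, hp⟩ : m = -(z₁ + z₂ + z₃) ∧ n = z₁ * z₂ + z₁ * z₃ + z₂ * z₃ ∧
      p = -(z₁ * z₂ * z₃) := by
    simpa only [Cubic.mk.injEq, one_mul, true_and] using cubic_eq_of_roots_eq one_ne_zero hcubic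
  have hsum := sum_sq_add_mul_add hm hn b a
  rw [ha, sub_self] at hsum
  have hpairs := three_mul_sum_mul_sq_add_mul_add hm hn hp b a
  rw [hsum, hb, zero_pow two_ne_zero, add_zero, mul_eq_zero_iff_left h3] at hpairs
  rw [prod_X_add_C_eq_toPoly, hsum, hpairs]
  refine ⟨Cubic.coeff_eq_b, Cubic.coeff_eq_c,
    (z₁ ^ 2 + b * z₁ + a) * (z₂ ^ 2 + b * z₂ + a) * (z₃ ^ 2 + b * z₃ + a), ?_⟩
  simp only [Cubic.toPoly, C_1, C_0, one_mul, zero_mul, add_zero]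

/-- Bring §VI: if `m² ≠ 3n`, `b` is a root of the quadratic
`(3n - m²)b² + (2m³ - 7mn + 9p)b + (4m²n - m⁴ - n² - 6mp) = 0` and
`a = (mb - m² + 2n)/3`, then the quadratic Tschirnhaus transform
`T(Y) = ∏ᵢ (Y + zᵢ² + b·zᵢ + a)` of the cubic `X³ + mX² + nX + p`
loses both intermediate terms: `T(Y) = Y³ + c`. -/
theorem bring_cubic_remove_both_terms (m n p b : ℂ) (hm : m ^ 2 ≠ 3 * n)
    (hb : (3 * n - m ^ 2) * b ^ 2 + (2 * m ^ 3 - 7 * m * n + 9 * p) * b +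
      (4 * m ^ 2 * n - m ^ 4 - n ^ 2 - 6 * m * p) = 0)
    (a : ℂ) (ha : a = (m * b - m ^ 2 + 2 * n) / 3)
    (z₁ z₂ z₃ : ℂ)
    (hroots : (X ^ 3 + C m * X ^ 2 + C n * X + C p).roots = {z₁, z₂, z₃}) :
    ((X + C (z₁ ^ 2 + b * z₁ + a)) * (X + C (z₂ ^ 2 + b * z₂ + a)) *
        (X + C (z₃ ^ 2 + b * z₃ + a))).coeff 2 = 0 ∧
    ((X + C (z₁ ^ 2 + b * z₁ + a)) * (X + C (z₂ ^ 2 + b * z₂ + a)) *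
        (X + C (z₃ ^ 2 + b * z₃ + a))).coeff 1 = 0 ∧
    ∃ c : ℂ,
      (X + C (z₁ ^ 2 + b * z₁ + a)) * (X + C (z₂ ^ 2 + b * z₂ + a)) *
        (X + C (z₃ ^ 2 + b * z₃ + a)) = X ^ 3 + C c :=
  bring_cubic_remove_both_terms_general three_ne_zero hb (by rw [ha]; ring) hroots
end

section
/- Let p, q, a, b ∈ ℂ and let z₁, z₂, z₃, z₄ be the roots with multiplicity of X⁴ + pX + q over ℂ. Then in the polynomial T(Y) = ∏ᵢ₌₁⁴ (Y + zᵢ² + b·zᵢ + a): the coefficient of Y³ equals 4a, the coefficient of Y² equals 6a² + 3pb + 2q, and the coefficient of Y¹ equals 4a³ + 4qa + 6abp + p² − pb³ − 4qb². -/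
/-! The subsidiary equation `z² + bz + a + y = 0` expresses `y = -(z² + bz + a)`, and its two
solutions for this `y` are `z` and `-b - z`. Hence each factor of the transform splits as
`y + zᵢ² + bzᵢ + a = (z - zᵢ)((-b - z) - zᵢ)`, so that `T(y) = f(z) f(-b - z)`. For
`f = X⁴ + pX + q` the right-hand side is symmetric in `z` and `-b - z`, hence a polynomial in their
sum `-b` and their product `y + a`. A polynomial is determined by its composite with
`-(X² + bX + a)`, so this polynomial is `T`. -/

open Polynomial

section Ring

variable {R : Type*} [Ring R]

theorem comp_left_injective_of_isRightRegular {g : R[X]} (hdeg : g.natDegree ≠ 0)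
    (hreg : IsRightRegular g.leadingCoeff) : Function.Injective fun f : R[X] => f.comp g := by
  intro f₁ f₂ h
  have hcomp : (f₁ - f₂).comp g = 0 := by rw [sub_comp, sub_eq_zero]; exact h
  have hlead := coeff_comp_degree_mul_degree (p := f₁ - f₂) hdeg
  rw [hcomp, coeff_zero] at hlead
  have hzero : (f₁ - f₂).leadingCoeff = 0 := hreg.pow _ (by simpa using hlead.symm)
  exact sub_eq_zero.mp (leadingCoeff_eq_zero.mp hzero)

theorem comp_neg_quadratic_injective (b a : R) :
    Function.Injective fun f : R[X] => f.comp (-(X ^ 2 + C b * X + C a)) := by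
  nontriviality R
  have hdeg : (X ^ 2 + C b * X + C a).natDegree = 2 := by compute_degree!
  have hmonic : (X ^ 2 + C b * X + C a).Monic := by monicity!
  refine comp_left_injective_of_isRightRegular (by rw [natDegree_neg, hdeg]; decide) ?_
  rw [leadingCoeff_neg, hmonic.leadingCoeff]
  exact isUnit_one.neg.isRegular.right

end Ring

section CommRing

variable {R : Type*} [CommRing R]

/-- The Tschirnhaus transform, by the subsidiary equation `z² + bz + a + y = 0`, of the monic
polynomial whose roots are the elements of `s`. It is given as a function of the multiset of roots,
which over a general ring the polynomial does not determine. -/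
noncomputable def quadraticTschirnhaus (s : Multiset R) (b a : R) : R[X] :=
  (s.map fun z => X + C (z ^ 2 + b * z + a)).prod

theorem quadraticTschirnhaus_comp_neg_quadratic (s : Multiset R) (b a : R) :
    (quadraticTschirnhaus s b a).comp (-(X ^ 2 + C b * X + C a)) =
      (s.map fun z => X - C z).prod * (s.map fun z => X - C z).prod.comp (-C b - X) := by
  have factor (z : R) : (X + C (z ^ 2 + b * z + a)).comp (-(X ^ 2 + C b * X + C a)) =
      (X - C z) * (X - C z).comp (-C b - X) := by
    simp only [add_comp, sub_comp, X_comp, C_comp]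
    simp only [map_add, map_mul, map_pow]
    ring
  simp only [quadraticTschirnhaus, multiset_prod_comp, Multiset.map_map, Function.comp_def,
    factor, Multiset.prod_map_mul]

theorem quadraticTschirnhaus_quartic {p q : R} {s : Multiset R}
    (hs : (s.map fun z => X - C z).prod = X ^ 4 + C p * X + C q) (b a : R) :
    quadraticTschirnhaus s b a =
      (X + C a) ^ 4 + C (3 * p * b + 2 * q) * (X + C a) ^ 2 +
        C (p ^ 2 - p * b ^ 3 - 4 * q * b ^ 2) * (X + C a) + C (q * (b ^ 4 - p * b + q)) := by
  apply comp_neg_quadratic_injective b a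
  dsimp only
  rw [quadraticTschirnhaus_comp_neg_quadratic, hs]
  simp only [add_comp, mul_comp, pow_comp, X_comp, C_comp]
  simp only [map_add, map_sub, map_mul, map_pow, map_ofNat]
  ring

theorem bring_quartic_tschirnhaus_coeffs_general {p q : R} {s : Multiset R}
    (hs : (s.map fun z => X - C z).prod = X ^ 4 + C p * X + C q) (b a : R) :
    (quadraticTschirnhaus s b a).coeff 3 = 4 * a ∧
    (quadraticTschirnhaus s b a).coeff 2 = 6 * a ^ 2 + 3 * p * b + 2 * q ∧
    (quadraticTschirnhaus s b a).coeff 1 =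
      4 * a ^ 3 + 4 * q * a + 6 * a * b * p + p ^ 2 - p * b ^ 3 - 4 * q * b ^ 2 := by
  have expand : quadraticTschirnhaus s b a =
      X ^ 4 + C (4 * a) * X ^ 3 + C (6 * a ^ 2 + 3 * p * b + 2 * q) * X ^ 2 +
        C (4 * a ^ 3 + 4 * q * a + 6 * a * b * p + p ^ 2 - p * b ^ 3 - 4 * q * b ^ 2) * X +
        C (a ^ 4 + (3 * p * b + 2 * q) * a ^ 2 + (p ^ 2 - p * b ^ 3 - 4 * q * b ^ 2) * a +
          q * (b ^ 4 - p * b + q)) := by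
    rw [quadraticTschirnhaus_quartic hs]
    simp only [map_add, map_sub, map_mul, map_pow, map_ofNat]
    ring
  rw [expand]
  refine ⟨?_, ?_, ?_⟩ <;> simp [coeff_C, coeff_X_pow, -map_add, -map_sub, -map_mul]

end CommRing

/-- Bring §VII: for the quartic `X⁴ + pX + q` with roots `z₁, …, z₄` (with
multiplicity), the quadratic Tschirnhaus transform
`T(Y) = ∏ᵢ (Y + zᵢ² + b·zᵢ + a)` has coefficient `4a` of `Y³`, coefficient
`6a² + 3pb + 2q` of `Y²`, and coefficient
`4a³ + 4qa + 6abp + p² - pb³ - 4qb²` of `Y`. -/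
theorem bring_quartic_tschirnhaus_coeffs (p q a b z₁ z₂ z₃ z₄ : ℂ)
    (hroots : (X ^ 4 + C p * X + C q).roots = {z₁, z₂, z₃, z₄}) :
    ((X + C (z₁ ^ 2 + b * z₁ + a)) * (X + C (z₂ ^ 2 + b * z₂ + a)) *
        (X + C (z₃ ^ 2 + b * z₃ + a)) * (X + C (z₄ ^ 2 + b * z₄ + a))).coeff 3 =
      4 * a ∧
    ((X + C (z₁ ^ 2 + b * z₁ + a)) * (X + C (z₂ ^ 2 + b * z₂ + a)) *
        (X + C (z₃ ^ 2 + b * z₃ + a)) * (X + C (z₄ ^ 2 + b * z₄ + a))).coeff 2 =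
      6 * a ^ 2 + 3 * p * b + 2 * q ∧
    ((X + C (z₁ ^ 2 + b * z₁ + a)) * (X + C (z₂ ^ 2 + b * z₂ + a)) *
        (X + C (z₃ ^ 2 + b * z₃ + a)) * (X + C (z₄ ^ 2 + b * z₄ + a))).coeff 1 =
      4 * a ^ 3 + 4 * q * a + 6 * a * b * p + p ^ 2 - p * b ^ 3 - 4 * q * b ^ 2 := by
  have hs := hroots ▸ (IsAlgClosed.splits _).eq_prod_roots_of_monic (by monicity!)
  simpa [quadraticTschirnhaus, mul_assoc] using bring_quartic_tschirnhaus_coeffs_general hs.symm b a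
end
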